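/- Let B be a bialgebra over K with m = Ker ε, and consider the vertical differential δ_c^{p,q} : C^{p,q} → C^{p+1,q} given by δ_c^{p,q}(f) = (Id ⊗ f) ∘ σ^q + Σ_{j=1}^{p} (−1)^j Δ_j^p ∘ f + (−1)^{p+1} (f ⊗ Id) ∘ τ^q. If f ∈ C^{p,q} factors through m, then δ_c^{p,q}(f) also factors through m. -/

import Mathlib

open TensorProduct

namespace GBD

variable (K B : Type*) [Field K] [Ring B] [Bialgebra K B]

/-- The `n`-th tensor power `B^{⊗n}`. -/
abbrev T (n : ℕ) := PiTensorProduct K (fun _ : Fin n => B)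

/-- Splitting off the first tensor factor: `B^{⊗(n+1)} ≃ B ⊗ B^{⊗n}`. -/
noncomputable def split (n : ℕ) : T K B (n + 1) ≃ₗ[K] B ⊗[K] T K B n :=
  ((PiTensorProduct.reindex K (fun _ : Fin (n+1) => B)
      ((finCongr (Nat.add_comm 1 n)).symm.trans finSumFinEquiv.symm)).trans
    (PiTensorProduct.tmulEquiv K B).symm).trans
      (TensorProduct.congr (PiTensorProduct.subsingletonEquiv (0 : Fin 1))
        (LinearEquiv.refl K _))

/-- Splitting off the last tensor factor: `B^{⊗(n+1)} ≃ B^{⊗n} ⊗ B`. -/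
noncomputable def splitLast (n : ℕ) : T K B (n + 1) ≃ₗ[K] T K B n ⊗[K] B :=
  ((PiTensorProduct.reindex K (fun _ : Fin (n+1) => B) finSumFinEquiv.symm).trans
    (PiTensorProduct.tmulEquiv K B).symm).trans
      (TensorProduct.congr (LinearEquiv.refl K _)
        (PiTensorProduct.subsingletonEquiv (0 : Fin 1)))

/-- Iterated comultiplication `Δ^{(n)} : B → B^{⊗n}` (with `Δ^{(0)} = ε`, `Δ^{(1)} = Id`). -/
noncomputable def iterComul : (n : ℕ) → (B →ₗ[K] T K B n)
  | 0 => (PiTensorProduct.isEmptyEquiv (Fin 0)).symm.toLinearMap ∘ₗ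
      (Coalgebra.counit (R := K) (A := B))
  | (n + 1) => (split K B n).symm.toLinearMap ∘ₗ
      LinearMap.lTensor B (iterComul n) ∘ₗ (Coalgebra.comul (R := K) (A := B))

/-- Componentwise comultiplication `B^{⊗n} → B^{⊗n} ⊗ B^{⊗n}`,
`b¹⊗⋯⊗bⁿ ↦ (b¹₍₁₎⊗⋯⊗bⁿ₍₁₎) ⊗ (b¹₍₂₎⊗⋯⊗bⁿ₍₂₎)`. -/
noncomputable def comulT : (n : ℕ) → (T K B n →ₗ[K] T K B n ⊗[K] T K B n)
  | 0 => (TensorProduct.congr (PiTensorProduct.isEmptyEquiv (Fin 0)).symm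
        (PiTensorProduct.isEmptyEquiv (Fin 0)).symm).toLinearMap ∘ₗ
      (TensorProduct.lid K K).symm.toLinearMap ∘ₗ
        (PiTensorProduct.isEmptyEquiv (Fin 0)).toLinearMap
  | (n + 1) =>
      (TensorProduct.congr (split K B n).symm (split K B n).symm).toLinearMap ∘ₗ
        (TensorProduct.tensorTensorTensorComm K B B (T K B n) (T K B n)).toLinearMap ∘ₗ
          TensorProduct.map (Coalgebra.comul (R := K) (A := B)) (comulT n) ∘ₗ
            (split K B n).toLinearMap

/-- The product of all tensor factors, `B^{⊗n} → B`, `b¹⊗⋯⊗bⁿ ↦ b¹⋯bⁿ`. -/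
noncomputable def prodT (n : ℕ) : T K B n →ₗ[K] B :=
  PiTensorProduct.lift (MultilinearMap.mkPiAlgebraFin K n B)

/-- `μ_i : B^{⊗(q+1)} → B^{⊗q}` multiplying the `i`-th and `(i+1)`-th factors
(`i` is 0-indexed here). -/
noncomputable def mulAt : (q : ℕ) → ℕ → (T K B (q + 1) →ₗ[K] T K B q)
  | 0, _ => 0
  | (q + 1), 0 => (split K B q).symm.toLinearMap ∘ₗ
      LinearMap.rTensor (T K B q) (LinearMap.mul' K B) ∘ₗ
        (TensorProduct.assoc K B B (T K B q)).symm.toLinearMap ∘ₗ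
          LinearMap.lTensor B (split K B q).toLinearMap ∘ₗ
            (split K B (q + 1)).toLinearMap
  | (q + 1), (i + 1) => (split K B q).symm.toLinearMap ∘ₗ
      LinearMap.lTensor B (mulAt q i) ∘ₗ (split K B (q + 1)).toLinearMap

/-- `Δ_j : B^{⊗p} → B^{⊗(p+1)}` applying `Δ` to the `j`-th factor (`j` is 0-indexed). -/
noncomputable def comulAt : (p : ℕ) → ℕ → (T K B p →ₗ[K] T K B (p + 1))
  | 0, _ => 0
  | (p + 1), 0 => (split K B (p + 1)).symm.toLinearMap ∘ₗ
      LinearMap.lTensor B (split K B p).symm.toLinearMap ∘ₗ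
        (TensorProduct.assoc K B B (T K B p)).toLinearMap ∘ₗ
          LinearMap.rTensor (T K B p) (Coalgebra.comul (R := K) (A := B)) ∘ₗ
            (split K B p).toLinearMap
  | (p + 1), (i + 1) => (split K B (p + 1)).symm.toLinearMap ∘ₗ
      LinearMap.lTensor B (comulAt p i) ∘ₗ (split K B p).toLinearMap

/-- `λ^p : B^{⊗(p+1)} → B^{⊗p}`, `b¹⊗b²⊗⋯⊗b^{p+1} ↦ b¹₍₁₎b² ⊗ ⋯ ⊗ b¹₍ₚ₎b^{p+1}`. -/
noncomputable def lamMap (p : ℕ) : T K B (p + 1) →ₗ[K] T K B p :=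
  LinearMap.mul' K (T K B p) ∘ₗ TensorProduct.map (iterComul K B p) LinearMap.id ∘ₗ
    (split K B p).toLinearMap

/-- `ρ^p : B^{⊗(p+1)} → B^{⊗p}`, `b¹⊗⋯⊗b^p⊗b^{p+1} ↦ b¹b^{p+1}₍₁₎ ⊗ ⋯ ⊗ b^p b^{p+1}₍ₚ₎`. -/
noncomputable def rhoMap (p : ℕ) : T K B (p + 1) →ₗ[K] T K B p :=
  LinearMap.mul' K (T K B p) ∘ₗ TensorProduct.map LinearMap.id (iterComul K B p) ∘ₗ
    (splitLast K B p).toLinearMap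

/-- `σ^q : B^{⊗q} → B^{⊗(q+1)}`, `b¹⊗⋯⊗b^q ↦ (b¹₍₁₎⋯b^q₍₁₎) ⊗ b¹₍₂₎ ⊗ ⋯ ⊗ b^q₍₂₎`. -/
noncomputable def sigmaMap (q : ℕ) : T K B q →ₗ[K] T K B (q + 1) :=
  (split K B q).symm.toLinearMap ∘ₗ
    TensorProduct.map (prodT K B q) LinearMap.id ∘ₗ comulT K B q

/-- `τ^q : B^{⊗q} → B^{⊗(q+1)}`, `b¹⊗⋯⊗b^q ↦ b¹₍₁₎ ⊗ ⋯ ⊗ b^q₍₁₎ ⊗ (b¹₍₂₎⋯b^q₍₂₎)`. -/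
noncomputable def tauMap (q : ℕ) : T K B q →ₗ[K] T K B (q + 1) :=
  (splitLast K B q).symm.toLinearMap ∘ₗ
    TensorProduct.map LinearMap.id (prodT K B q) ∘ₗ comulT K B q

/-- The horizontal (Hochschild-type) differential
`δ_h^{p,q} : Hom(B^{⊗q}, B^{⊗p}) → Hom(B^{⊗(q+1)}, B^{⊗p})`. -/
noncomputable def deltaH (p q : ℕ) (f : T K B q →ₗ[K] T K B p) :
    T K B (q + 1) →ₗ[K] T K B p :=
  lamMap K B p ∘ₗ (split K B p).symm.toLinearMap ∘ₗ LinearMap.lTensor B f ∘ₗ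
      (split K B q).toLinearMap
    + ∑ i ∈ Finset.range q, ((-1 : ℤ) ^ (i + 1)) • (f ∘ₗ mulAt K B q i)
    + ((-1 : ℤ) ^ (q + 1)) •
        (rhoMap K B p ∘ₗ (splitLast K B p).symm.toLinearMap ∘ₗ LinearMap.rTensor B f ∘ₗ
          (splitLast K B q).toLinearMap)

/-- The vertical (coHochschild-type) differential
`δ_c^{p,q} : Hom(B^{⊗q}, B^{⊗p}) → Hom(B^{⊗q}, B^{⊗(p+1)})`. -/
noncomputable def deltaCv (p q : ℕ) (f : T K B q →ₗ[K] T K B p) :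
    T K B q →ₗ[K] T K B (p + 1) :=
  (split K B p).symm.toLinearMap ∘ₗ LinearMap.lTensor B f ∘ₗ (split K B q).toLinearMap ∘ₗ
      sigmaMap K B q
    + ∑ j ∈ Finset.range p, ((-1 : ℤ) ^ (j + 1)) • (comulAt K B p j ∘ₗ f)
    + ((-1 : ℤ) ^ (p + 1)) •
        ((splitLast K B p).symm.toLinearMap ∘ₗ LinearMap.rTensor B f ∘ₗ
          (splitLast K B q).toLinearMap ∘ₗ tauMap K B q)


/-- The augmentation ideal `m = ker ε`. -/
noncomputable def aug : Submodule K B := LinearMap.ker (Coalgebra.counit (R := K) (A := B))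

/-- The projection `π : B → m`, `π(b) = b − ε(b)·1`. -/
noncomputable def projAug : B →ₗ[K] aug K B :=
  LinearMap.codRestrict (aug K B)
    (LinearMap.id - Algebra.linearMap K B ∘ₗ Coalgebra.counit)
    (fun b => by simp [aug, LinearMap.mem_ker])

/-- `f : B^{⊗q} → B^{⊗p}` factors through the augmentation ideal, i.e. `f` lies in the
image of the embedding `D^{p,q} = Hom(m^{⊗q}, m^{⊗p}) ↪ C^{p,q}`,
`f' ↦ i^{⊗p} ∘ f' ∘ π^{⊗q}`. -/
def FactorsThroughAug (p q : ℕ) (f : T K B q →ₗ[K] T K B p) : Prop :=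
  ∃ f' : PiTensorProduct K (fun _ : Fin q => aug K B) →ₗ[K]
      PiTensorProduct K (fun _ : Fin p => aug K B),
    f = PiTensorProduct.map (fun _ : Fin p => (aug K B).subtype) ∘ₗ f' ∘ₗ
          PiTensorProduct.map (fun _ : Fin q => projAug K B)

variable {K B}

theorem split_symm_tmul_tprod (n : ℕ) (b : B) (v : Fin n → B) :
    (split K B n).symm (b ⊗ₜ PiTensorProduct.tprod K v) =
      PiTensorProduct.tprod K (Fin.cons b v : Fin (n + 1) → B) := by
  rw [LinearEquiv.symm_apply_eq]
  simp only [split, LinearEquiv.trans_apply]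
  erw [PiTensorProduct.reindex_tprod]
  erw [PiTensorProduct.tmulEquiv_symm_apply]
  simp only [TensorProduct.congr_tmul]
  erw [PiTensorProduct.subsingletonEquiv_apply_tprod]
  have h₀ : ((finCongr (Nat.add_comm 1 n)).symm.trans finSumFinEquiv.symm).symm
      (Sum.inl (0 : Fin 1)) = (0 : Fin (n + 1)) := rfl
  have h₁ (i : Fin n) : ((finCongr (Nat.add_comm 1 n)).symm.trans finSumFinEquiv.symm).symm
      (Sum.inr i) = i.succ := by
    ext
    simp
  rw [h₀, LinearEquiv.refl_apply]
  simp only [h₁, Fin.cons_zero, Fin.cons_succ]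

theorem splitLast_symm_tprod_tmul (n : ℕ) (v : Fin n → B) (b : B) :
    (splitLast K B n).symm (PiTensorProduct.tprod K v ⊗ₜ b) =
      PiTensorProduct.tprod K (Fin.snoc v b : Fin (n + 1) → B) := by
  rw [LinearEquiv.symm_apply_eq]
  simp only [splitLast, LinearEquiv.trans_apply]
  erw [PiTensorProduct.reindex_tprod]
  erw [PiTensorProduct.tmulEquiv_symm_apply]
  simp only [TensorProduct.congr_tmul]
  erw [PiTensorProduct.subsingletonEquiv_apply_tprod]
  have h₀ : finSumFinEquiv.symm.symm (Sum.inr (0 : Fin 1)) = Fin.last n := rfl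
  have h₁ (i : Fin n) : finSumFinEquiv.symm.symm (Sum.inl i : Fin n ⊕ Fin 1) = i.castSucc := rfl
  rw [h₀, LinearEquiv.refl_apply]
  simp only [h₁, Fin.snoc_last, Fin.snoc_castSucc]

/-- To check a property of tensors in `B^{⊗(n+1)}` that is closed under addition, it suffices to
check it on `b ⊗ y` with `b : B` and `y : B^{⊗n}`. -/
theorem split_induction {n : ℕ} {C : T K B (n + 1) → Prop} (x : T K B (n + 1))
    (tmul : ∀ b y, C ((split K B n).symm (b ⊗ₜ y)))
    (add : ∀ x y, C x → C y → C (x + y)) : C x := by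
  obtain ⟨z, rfl⟩ := (split K B n).symm.surjective x
  induction z with
  | zero => simpa using tmul 0 0
  | tmul b y => exact tmul b y
  | add z w hz hw => rw [map_add]; exact add _ _ hz hw

variable (K B) in
/-- The projection `b ↦ b − ε(b)·1` as an endomorphism of `B`. -/
noncomputable def projEnd : B →ₗ[K] B :=
  (aug K B).subtype ∘ₗ projAug K B

theorem projEnd_apply (b : B) :
    projEnd K B b = b - algebraMap K B (Coalgebra.counit (R := K) b) := rfl

theorem projEnd_one : projEnd K B 1 = 0 := by
  simp [projEnd_apply]

theorem projAug_subtype : projAug K B ∘ₗ (aug K B).subtype = LinearMap.id := by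
  ext ⟨b, hb⟩
  have : Coalgebra.counit (R := K) b = 0 := hb
  change b - algebraMap K B (Coalgebra.counit b) = b
  rw [this, map_zero, sub_zero]

theorem projEnd_projEnd (b : B) : projEnd K B (projEnd K B b) = projEnd K B b :=
  congrArg Subtype.val (LinearMap.congr_fun projAug_subtype (projAug K B b))

theorem counit_projEnd (b : B) : Coalgebra.counit (R := K) (projEnd K B b) = 0 :=
  (projAug K B b).2

variable (K B) in
/-- The tensor power of `projEnd`. -/
noncomputable def projT (n : ℕ) : T K B n →ₗ[K] T K B n :=
  PiTensorProduct.map fun _ : Fin n => projEnd K B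

theorem projT_split_symm (n : ℕ) (b : B) (y : T K B n) :
    projT K B (n + 1) ((split K B n).symm (b ⊗ₜ y)) =
      (split K B n).symm (projEnd K B b ⊗ₜ projT K B n y) := by
  induction y using PiTensorProduct.induction_on with
  | smul_tprod r v =>
    simp only [TensorProduct.tmul_smul, map_smul, split_symm_tmul_tprod, projT,
      PiTensorProduct.map_tprod]
    congr 2
    ext i
    refine Fin.cases ?_ (fun i => ?_) i <;> simp
  | add x y hx hy => simp only [TensorProduct.tmul_add, map_add, hx, hy]

theorem projT_splitLast_symm (n : ℕ) (y : T K B n) (b : B) :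
    projT K B (n + 1) ((splitLast K B n).symm (y ⊗ₜ b)) =
      (splitLast K B n).symm (projT K B n y ⊗ₜ projEnd K B b) := by
  induction y using PiTensorProduct.induction_on with
  | smul_tprod r v =>
    simp only [← TensorProduct.smul_tmul', map_smul, splitLast_symm_tprod_tmul, projT,
      PiTensorProduct.map_tprod]
    congr 2
    ext i
    refine Fin.lastCases ?_ (fun i => ?_) i <;> simp
  | add x y hx hy => simp only [TensorProduct.add_tmul, map_add, hx, hy]

theorem projT_projT (n : ℕ) (x : T K B n) : projT K B n (projT K B n x) = projT K B n x := by
  rw [projT, ← LinearMap.comp_apply, ← PiTensorProduct.map_comp]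
  congr 2
  ext1 i
  exact LinearMap.ext projEnd_projEnd

theorem factorsThroughAug_iff {p q : ℕ} (f : T K B q →ₗ[K] T K B p) :
    FactorsThroughAug K B p q f ↔
      (∀ x, f (projT K B q x) = f x) ∧ ∀ x, projT K B p (f x) = f x := by
  have hP (n : ℕ) : projT K B n = PiTensorProduct.map (fun _ : Fin n => (aug K B).subtype) ∘ₗ
      PiTensorProduct.map (fun _ : Fin n => projAug K B) :=
    PiTensorProduct.map_comp _ _
  have hid (n : ℕ) : PiTensorProduct.map (fun _ : Fin n => projAug K B) ∘ₗ
      PiTensorProduct.map (fun _ : Fin n => (aug K B).subtype) = LinearMap.id := by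
    rw [← PiTensorProduct.map_comp]
    simp only [projAug_subtype]
    exact PiTensorProduct.map_id
  have hid' (n : ℕ) (x) := LinearMap.congr_fun (hid n) x
  simp only [LinearMap.comp_apply, LinearMap.id_apply] at hid'
  constructor
  · rintro ⟨f', rfl⟩
    simp [hP, hid']
  · rintro ⟨h₁, h₂⟩
    refine ⟨PiTensorProduct.map (fun _ : Fin p => projAug K B) ∘ₗ f ∘ₗ
      PiTensorProduct.map (fun _ : Fin q => (aug K B).subtype), ?_⟩
    refine LinearMap.ext fun x => ?_
    rw [← h₂, ← h₁, hP, hP]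
    rfl

variable (K B) in
/-- Insertion of `1` as a new tensor factor at the (0-indexed) place `j`. -/
noncomputable def insertOne : (n : ℕ) → ℕ → (T K B n →ₗ[K] T K B (n + 1))
  | n, 0 => (split K B n).symm.toLinearMap ∘ₗ TensorProduct.mk K B (T K B n) 1
  | 0, _ + 1 => 0
  | n + 1, j + 1 => (split K B (n + 1)).symm.toLinearMap ∘ₗ
      LinearMap.lTensor B (insertOne n j) ∘ₗ (split K B n).toLinearMap

theorem insertOne_zero (n : ℕ) (x : T K B n) :
    insertOne K B n 0 x = (split K B n).symm (1 ⊗ₜ x) := by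
  cases n <;> rfl

theorem insertOne_succ (n j : ℕ) (b : B) (y : T K B n) :
    insertOne K B (n + 1) (j + 1) ((split K B n).symm (b ⊗ₜ y)) =
      (split K B (n + 1)).symm (b ⊗ₜ insertOne K B n j y) := by
  simp [insertOne]

theorem insertOne_self (n : ℕ) (x : T K B n) :
    insertOne K B n n x = (splitLast K B n).symm (x ⊗ₜ 1) := by
  induction x using PiTensorProduct.induction_on with
  | add x y hx hy => simp only [TensorProduct.add_tmul, map_add, hx, hy]
  | smul_tprod r v =>
    simp only [← TensorProduct.smul_tmul', map_smul, splitLast_symm_tprod_tmul]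
    refine congrArg (r • ·) ?_
    induction n with
    | zero =>
      rw [insertOne_zero, split_symm_tmul_tprod]
      congr 1
      funext i
      fin_cases i
      rfl
    | succ n ih =>
      obtain ⟨a, w, rfl⟩ : ∃ (a : B) (w : Fin n → B), v = Fin.cons a w :=
        ⟨v 0, Fin.tail v, (Fin.cons_self_tail v).symm⟩
      rw [← split_symm_tmul_tprod, insertOne_succ, ih, split_symm_tmul_tprod,
        Fin.cons_snoc_eq_snoc_cons]

theorem map_projEnd_comul (b : B) :
    TensorProduct.map (projEnd K B) (projEnd K B)
        (Coalgebra.comul (R := K) (projEnd K B b)) =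
      Coalgebra.comul (R := K) (projEnd K B b) - 1 ⊗ₜ projEnd K B b - projEnd K B b ⊗ₜ 1 := by
  have key (u : B ⊗[K] B) : TensorProduct.map (projEnd K B) (projEnd K B) u =
      u - 1 ⊗ₜ TensorProduct.lid K B (LinearMap.rTensor B Coalgebra.counit u)
        - TensorProduct.rid K B (LinearMap.lTensor B Coalgebra.counit u) ⊗ₜ 1
        + (Coalgebra.counit (R := K) (TensorProduct.lid K B
            (LinearMap.rTensor B Coalgebra.counit u))) • (1 ⊗ₜ 1) := by
    induction u with
    | zero => simp
    | tmul a c =>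
      simp [projEnd_apply, TensorProduct.sub_tmul, TensorProduct.tmul_sub,
        Algebra.algebraMap_eq_smul_one, ← TensorProduct.smul_tmul', TensorProduct.tmul_smul]
      module
    | add u w hu hw =>
      rw [map_add, hu, hw]
      simp only [map_add, TensorProduct.add_tmul, TensorProduct.tmul_add, add_smul]
      abel
  rw [key]
  simp [counit_projEnd]

theorem projT_comulAt (p j : ℕ) (hj : j < p) (x : T K B p) :
    projT K B (p + 1) (comulAt K B p j (projT K B p x)) =
      comulAt K B p j (projT K B p x) - insertOne K B p j (projT K B p x)
        - insertOne K B p (j + 1) (projT K B p x) := by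
  induction p generalizing j with
  | zero => omega
  | succ p ih =>
    induction x using split_induction with
    | add x y hx hy => simp only [map_add, hx, hy]; abel
    | tmul b y =>
      rw [projT_split_symm]
      cases j with
      | succ j =>
        simp only [comulAt, insertOne_succ, LinearMap.comp_apply, LinearEquiv.coe_coe,
          LinearEquiv.apply_symm_apply, LinearMap.lTensor_tmul, projT_split_symm,
          projEnd_projEnd, ih j (by omega), TensorProduct.tmul_sub, map_sub]
      | zero =>
        have key (u : B ⊗[K] B) (z : T K B p) :
            projT K B (p + 2) ((split K B (p + 1)).symm (LinearMap.lTensor B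
              (split K B p).symm.toLinearMap (TensorProduct.assoc K B B (T K B p) (u ⊗ₜ z)))) =
            (split K B (p + 1)).symm (LinearMap.lTensor B
              (split K B p).symm.toLinearMap (TensorProduct.assoc K B B (T K B p)
                (TensorProduct.map (projEnd K B) (projEnd K B) u ⊗ₜ projT K B p z))) := by
          induction u with
          | zero => simp
          | tmul a c => simp [projT_split_symm]
          | add u w hu hw => simp only [TensorProduct.add_tmul, map_add, hu, hw]
        simp only [comulAt, insertOne_zero, insertOne_succ, LinearMap.comp_apply,
          LinearEquiv.coe_coe, LinearEquiv.apply_symm_apply, LinearMap.rTensor_tmul, key,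
          map_projEnd_comul, projT_projT, TensorProduct.sub_tmul, map_sub,
          TensorProduct.assoc_tmul, LinearMap.lTensor_tmul]

theorem comulT_split_symm (n : ℕ) (b : B) (y : T K B n) :
    comulT K B (n + 1) ((split K B n).symm (b ⊗ₜ y)) =
      TensorProduct.map (split K B n).symm.toLinearMap (split K B n).symm.toLinearMap
        (TensorProduct.tensorTensorTensorComm K B B (T K B n) (T K B n)
          (Coalgebra.comul (R := K) b ⊗ₜ comulT K B n y)) := by
  simp only [comulT, LinearMap.comp_apply, LinearEquiv.coe_coe, LinearEquiv.apply_symm_apply,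
    TensorProduct.map_tmul]
  rfl

theorem map_split_symm_tensorTensorTensorComm (n : ℕ) (g h : B →ₗ[K] B)
    (G H : T K B n →ₗ[K] T K B n) (G' H' : T K B (n + 1) →ₗ[K] T K B (n + 1))
    (hG : ∀ b y, G' ((split K B n).symm (b ⊗ₜ y)) = (split K B n).symm (g b ⊗ₜ G y))
    (hH : ∀ b y, H' ((split K B n).symm (b ⊗ₜ y)) = (split K B n).symm (h b ⊗ₜ H y))
    (u : B ⊗[K] B) (w : T K B n ⊗[K] T K B n) :
    TensorProduct.map G' H' (TensorProduct.map (split K B n).symm.toLinearMap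
        (split K B n).symm.toLinearMap
        (TensorProduct.tensorTensorTensorComm K B B (T K B n) (T K B n) (u ⊗ₜ w))) =
      TensorProduct.map (split K B n).symm.toLinearMap (split K B n).symm.toLinearMap
        (TensorProduct.tensorTensorTensorComm K B B (T K B n) (T K B n)
          (TensorProduct.map g h u ⊗ₜ TensorProduct.map G H w)) := by
  induction u with
  | zero => simp only [TensorProduct.zero_tmul, LinearMap.map_zero, LinearEquiv.map_zero]
  | add u v hu hv => simp only [TensorProduct.add_tmul, map_add, hu, hv]
  | tmul a c =>
    induction w with
    | zero => simp only [TensorProduct.tmul_zero, LinearMap.map_zero, LinearEquiv.map_zero]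
    | add u v hu hv => simp only [TensorProduct.tmul_add, map_add, hu, hv]
    | tmul y z => simp [hG, hH]

theorem projT_zero (x : T K B 0) : projT K B 0 x = x := by
  have : (fun _ : Fin 0 => projEnd K B) = fun _ => LinearMap.id := funext fun i => i.elim0
  rw [projT, this, PiTensorProduct.map_id, LinearMap.id_apply]

theorem lTensor_projT_comulT (n : ℕ) (x : T K B n) :
    LinearMap.lTensor (T K B n) (projT K B n) (comulT K B n (projT K B n x)) =
      LinearMap.lTensor (T K B n) (projT K B n) (comulT K B n x) := by
  induction n with
  | zero => rw [projT_zero]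
  | succ n ih =>
    have hB (b : B) : LinearMap.lTensor B (projEnd K B)
        (Coalgebra.comul (R := K) (projEnd K B b)) =
          LinearMap.lTensor B (projEnd K B) (Coalgebra.comul (R := K) b) := by
      rw [projEnd_apply b]
      simp [Algebra.algebraMap_eq_smul_one, Algebra.TensorProduct.one_def, projEnd_one]
    induction x using split_induction with
    | add x y hx hy => simp only [map_add, hx, hy]
    | tmul b y =>
      have key := map_split_symm_tensorTensorTensorComm n LinearMap.id (projEnd K B)
        LinearMap.id (projT K B n) LinearMap.id (projT K B (n + 1)) (fun _ _ => rfl)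
        (projT_split_symm n)
      rw [projT_split_symm, comulT_split_symm, comulT_split_symm]
      simp only [LinearMap.lTensor] at hB ih ⊢
      rw [key, key, hB, ih]

theorem rTensor_projT_comulT (n : ℕ) (x : T K B n) :
    LinearMap.rTensor (T K B n) (projT K B n) (comulT K B n (projT K B n x)) =
      LinearMap.rTensor (T K B n) (projT K B n) (comulT K B n x) := by
  induction n with
  | zero => rw [projT_zero]
  | succ n ih =>
    have hB (b : B) : LinearMap.rTensor B (projEnd K B)
        (Coalgebra.comul (R := K) (projEnd K B b)) =
          LinearMap.rTensor B (projEnd K B) (Coalgebra.comul (R := K) b) := by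
      rw [projEnd_apply b]
      simp [Algebra.algebraMap_eq_smul_one, Algebra.TensorProduct.one_def, projEnd_one]
    induction x using split_induction with
    | add x y hx hy => simp only [map_add, hx, hy]
    | tmul b y =>
      have key := map_split_symm_tensorTensorTensorComm n (projEnd K B) LinearMap.id
        (projT K B n) LinearMap.id (projT K B (n + 1)) LinearMap.id (projT_split_symm n)
        (fun _ _ => rfl)
      rw [projT_split_symm, comulT_split_symm, comulT_split_symm]
      simp only [LinearMap.rTensor] at hB ih ⊢
      rw [key, key, hB, ih]

theorem prodT_split_symm (n : ℕ) (b : B) (y : T K B n) :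
    prodT K B (n + 1) ((split K B n).symm (b ⊗ₜ y)) = b * prodT K B n y := by
  induction y using PiTensorProduct.induction_on with
  | smul_tprod r v =>
    simp only [TensorProduct.tmul_smul, map_smul, split_symm_tmul_tprod, prodT,
      PiTensorProduct.lift.tprod, MultilinearMap.mkPiAlgebraFin_apply, List.ofFn_succ,
      List.prod_cons, Fin.cons_zero, Fin.cons_succ, mul_smul_comm]
  | add x y hx hy => simp only [TensorProduct.tmul_add, map_add, mul_add, hx, hy]

theorem prodT_tprod_zero (v : Fin 0 → B) : prodT K B 0 (PiTensorProduct.tprod K v) = 1 := by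
  simp [prodT]

variable (K B) in
/-- The counit `B^{⊗n} → K`. -/
noncomputable def counitT (n : ℕ) : T K B n →ₗ[K] K :=
  Coalgebra.counit ∘ₗ prodT K B n

theorem counitT_split_symm (n : ℕ) (b : B) (y : T K B n) :
    counitT K B (n + 1) ((split K B n).symm (b ⊗ₜ y)) =
      Coalgebra.counit (R := K) b * counitT K B n y := by
  simp [counitT, prodT_split_symm]

theorem rTensor_counitT_comulT (n : ℕ) (x : T K B n) :
    LinearMap.rTensor (T K B n) (counitT K B n) (comulT K B n x) = 1 ⊗ₜ x := by
  apply (TensorProduct.lid K _).injective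
  rw [TensorProduct.lid_tmul, one_smul]
  induction n with
  | zero =>
    obtain ⟨r, rfl⟩ := (PiTensorProduct.isEmptyEquiv (R := K) (s := fun _ => B)
      (Fin 0)).symm.surjective x
    simp [comulT, counitT, prodT_tprod_zero]
  | succ n ih =>
    induction x using split_induction with
    | add x y hx hy => simp only [map_add, hx, hy]
    | tmul b y =>
      have key (u : B ⊗[K] B) (w : T K B n ⊗[K] T K B n) :
          TensorProduct.lid K _ (LinearMap.rTensor _ (counitT K B (n + 1))
            (TensorProduct.map (split K B n).symm.toLinearMap (split K B n).symm.toLinearMap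
              (TensorProduct.tensorTensorTensorComm K B B (T K B n) (T K B n) (u ⊗ₜ w)))) =
          (split K B n).symm
            (TensorProduct.lid K B (LinearMap.rTensor B Coalgebra.counit u) ⊗ₜ
              TensorProduct.lid K _ (LinearMap.rTensor _ (counitT K B n) w)) := by
        induction u with
        | zero =>
          simp only [TensorProduct.zero_tmul, LinearMap.map_zero, LinearEquiv.map_zero]
        | add u v hu hv => simp only [TensorProduct.add_tmul, map_add, hu, hv]
        | tmul a c =>
          induction w with
          | zero =>
            simp only [TensorProduct.tmul_zero, LinearMap.map_zero, LinearEquiv.map_zero]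
          | add u v hu hv => simp only [TensorProduct.tmul_add, map_add, hu, hv]
          | tmul y z =>
            simp [counitT_split_symm, ← TensorProduct.smul_tmul', TensorProduct.tmul_smul,
              mul_smul, smul_comm (Coalgebra.counit (R := K) a)]
      rw [comulT_split_symm, key, ih]
      simp

theorem lTensor_counitT_comulT (n : ℕ) (x : T K B n) :
    LinearMap.lTensor (T K B n) (counitT K B n) (comulT K B n x) = x ⊗ₜ 1 := by
  apply (TensorProduct.rid K _).injective
  rw [TensorProduct.rid_tmul, one_smul]
  induction n with
  | zero =>
    obtain ⟨r, rfl⟩ := (PiTensorProduct.isEmptyEquiv (R := K) (s := fun _ => B)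
      (Fin 0)).symm.surjective x
    simp [comulT, counitT, prodT_tprod_zero]
  | succ n ih =>
    induction x using split_induction with
    | add x y hx hy => simp only [map_add, hx, hy]
    | tmul b y =>
      have key (u : B ⊗[K] B) (w : T K B n ⊗[K] T K B n) :
          TensorProduct.rid K _ (LinearMap.lTensor _ (counitT K B (n + 1))
            (TensorProduct.map (split K B n).symm.toLinearMap (split K B n).symm.toLinearMap
              (TensorProduct.tensorTensorTensorComm K B B (T K B n) (T K B n) (u ⊗ₜ w)))) =
          (split K B n).symm
            (TensorProduct.rid K B (LinearMap.lTensor B Coalgebra.counit u) ⊗ₜ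
              TensorProduct.rid K _ (LinearMap.lTensor _ (counitT K B n) w)) := by
        induction u with
        | zero =>
          simp only [TensorProduct.zero_tmul, LinearMap.map_zero, LinearEquiv.map_zero]
        | add u v hu hv => simp only [TensorProduct.add_tmul, map_add, hu, hv]
        | tmul a c =>
          induction w with
          | zero =>
            simp only [TensorProduct.tmul_zero, LinearMap.map_zero, LinearEquiv.map_zero]
          | add u v hu hv => simp only [TensorProduct.tmul_add, map_add, hu, hv]
          | tmul y z =>
            simp [counitT_split_symm, ← TensorProduct.smul_tmul', TensorProduct.tmul_smul,
              mul_smul, smul_comm (Coalgebra.counit (R := K) c)]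
      rw [comulT_split_symm, key, ih]
      simp

/-- The outer term `(Id ⊗ f) ∘ σ^q`. -/
theorem split_lTensor_sigmaMap {p q : ℕ} (f : T K B q →ₗ[K] T K B p) (x : T K B q) :
    LinearMap.lTensor B f (split K B q (sigmaMap K B q x)) =
      TensorProduct.map (prodT K B q) f (comulT K B q x) := by
  simp only [sigmaMap, LinearMap.comp_apply, LinearEquiv.coe_coe, LinearEquiv.apply_symm_apply]
  rw [LinearMap.lTensor, ← LinearMap.comp_apply, ← TensorProduct.map_comp]
  rfl

/-- The outer term `(f ⊗ Id) ∘ τ^q`. -/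
theorem splitLast_rTensor_tauMap {p q : ℕ} (f : T K B q →ₗ[K] T K B p) (x : T K B q) :
    LinearMap.rTensor B f (splitLast K B q (tauMap K B q x)) =
      TensorProduct.map f (prodT K B q) (comulT K B q x) := by
  simp only [tauMap, LinearMap.comp_apply, LinearEquiv.coe_coe, LinearEquiv.apply_symm_apply]
  rw [LinearMap.rTensor, ← LinearMap.comp_apply, ← TensorProduct.map_comp]
  rfl

theorem deltaCv_apply (p q : ℕ) (f : T K B q →ₗ[K] T K B p) (x : T K B q) :
    deltaCv K B p q f x =
      (split K B p).symm (TensorProduct.map (prodT K B q) f (comulT K B q x))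
        + ∑ j ∈ Finset.range p, ((-1 : K) ^ (j + 1)) • comulAt K B p j (f x)
        + ((-1 : K) ^ (p + 1)) •
          (splitLast K B p).symm (TensorProduct.map f (prodT K B q) (comulT K B q x)) := by
  rw [← split_lTensor_sigmaMap, ← splitLast_rTensor_tauMap]
  have key {m n : ℕ} (g : T K B m →ₗ[K] T K B n) (k : ℕ) (y : T K B m) :
      (((-1 : ℤ) ^ k) • g) y = ((-1 : K) ^ k) • g y := by
    rcases Nat.even_or_odd k with h | h
    · rw [h.neg_one_pow, h.neg_one_pow, one_smul, one_smul]
    · rw [h.neg_one_pow, h.neg_one_pow, neg_smul, neg_smul, one_smul, one_smul,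
        LinearMap.neg_apply]
  simp only [deltaCv, LinearMap.add_apply, LinearMap.sum_apply, key, LinearMap.comp_apply,
    LinearEquiv.coe_coe]

theorem projT_split_symm_map {p q : ℕ} (f : T K B q →ₗ[K] T K B p)
    (hf : ∀ x, projT K B p (f x) = f x) (x : T K B q) :
    projT K B (p + 1) ((split K B p).symm (TensorProduct.map (prodT K B q) f (comulT K B q x))) =
      (split K B p).symm (TensorProduct.map (prodT K B q) f (comulT K B q x))
        - insertOne K B p 0 (f x) := by
  have key (u : T K B q ⊗[K] T K B q) :
      projT K B (p + 1) ((split K B p).symm (TensorProduct.map (prodT K B q) f u)) =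
        (split K B p).symm (TensorProduct.map (prodT K B q) f u)
          - insertOne K B p 0 (f (TensorProduct.lid K _
              (LinearMap.rTensor _ (counitT K B q) u))) := by
    induction u with
    | zero => simp
    | add u v hu hv => simp only [map_add, hu, hv]; abel
    | tmul y z =>
      simp [projT_split_symm, hf, projEnd_apply, counitT, insertOne_zero,
        TensorProduct.sub_tmul, Algebra.algebraMap_eq_smul_one, ← TensorProduct.smul_tmul']
  rw [key, rTensor_counitT_comulT, TensorProduct.lid_tmul, one_smul]

theorem projT_splitLast_symm_map {p q : ℕ} (f : T K B q →ₗ[K] T K B p)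
    (hf : ∀ x, projT K B p (f x) = f x) (x : T K B q) :
    projT K B (p + 1)
        ((splitLast K B p).symm (TensorProduct.map f (prodT K B q) (comulT K B q x))) =
      (splitLast K B p).symm (TensorProduct.map f (prodT K B q) (comulT K B q x))
        - insertOne K B p p (f x) := by
  have key (u : T K B q ⊗[K] T K B q) :
      projT K B (p + 1) ((splitLast K B p).symm (TensorProduct.map f (prodT K B q) u)) =
        (splitLast K B p).symm (TensorProduct.map f (prodT K B q) u)
          - insertOne K B p p (f (TensorProduct.rid K _
              (LinearMap.lTensor _ (counitT K B q) u))) := by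
    induction u with
    | zero => simp
    | add u v hu hv => simp only [map_add, hu, hv]; abel
    | tmul y z =>
      simp [projT_splitLast_symm, hf, projEnd_apply, counitT, insertOne_self,
        TensorProduct.tmul_sub, Algebra.algebraMap_eq_smul_one, TensorProduct.tmul_smul]
  rw [key, lTensor_counitT_comulT, TensorProduct.rid_tmul, one_smul]

theorem sum_range_neg_one_pow_smul_add {M : Type*} [AddCommGroup M] [Module K M] (a : ℕ → M) (p : ℕ) :
    ∑ j ∈ Finset.range p, ((-1 : K) ^ (j + 1)) • (a j + a (j + 1)) =
      -a 0 - ((-1 : K) ^ (p + 1)) • a p := by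
  induction p with
  | zero => simp
  | succ p ih =>
    rw [Finset.sum_range_succ, ih, pow_succ (-1 : K) (p + 1)]
    module

variable (K B)

/-- If `f ∈ C^{p,q} = Hom(B^{⊗q}, B^{⊗p})` factors through the
augmentation ideal `m = ker ε` (i.e. lies in the image of `D^{p,q} ↪ C^{p,q}`), then so
does its vertical differential `δ_c^{p,q}(f)`. -/
theorem deltaCv_factorsThroughAug (p q : ℕ) (hp : 1 ≤ p) (hq : 1 ≤ q)
    (f : T K B q →ₗ[K] T K B p) (hf : FactorsThroughAug K B p q f) :
    FactorsThroughAug K B (p + 1) q (deltaCv K B p q f) := by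
  obtain ⟨h₁, h₂⟩ := (factorsThroughAug_iff f).1 hf
  refine (factorsThroughAug_iff _).2 ⟨fun x => ?_, fun x => ?_⟩
  · have hl (u : T K B q ⊗[K] T K B q) : TensorProduct.map (prodT K B q) f u =
        TensorProduct.map (prodT K B q) f (LinearMap.lTensor _ (projT K B q) u) := by
      rw [← LinearMap.comp_apply, LinearMap.map_comp_lTensor, LinearMap.ext (f := f ∘ₗ _) h₁]
    have hr (u : T K B q ⊗[K] T K B q) : TensorProduct.map f (prodT K B q) u =
        TensorProduct.map f (prodT K B q) (LinearMap.rTensor _ (projT K B q) u) := by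
      rw [← LinearMap.comp_apply, LinearMap.map_comp_rTensor, LinearMap.ext (f := f ∘ₗ _) h₁]
    rw [deltaCv_apply, deltaCv_apply, h₁, hl, hr, lTensor_projT_comulT, rTensor_projT_comulT,
      ← hl, ← hr]
  · have hmid : ∀ j ∈ Finset.range p,
        ((-1 : K) ^ (j + 1)) • projT K B (p + 1) (comulAt K B p j (f x)) =
          ((-1 : K) ^ (j + 1)) • comulAt K B p j (f x) - ((-1 : K) ^ (j + 1)) •
            (insertOne K B p j (f x) + insertOne K B p (j + 1) (f x)) := by
      intro j hj
      have := projT_comulAt p j (Finset.mem_range.1 hj) (f x)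
      rw [h₂] at this
      rw [this, sub_sub, smul_sub]
    rw [deltaCv_apply, map_add, map_add, map_sum, map_smul, projT_split_symm_map f h₂,
      projT_splitLast_symm_map f h₂]
    simp only [map_smul]
    rw [Finset.sum_congr rfl hmid, Finset.sum_sub_distrib,
      sum_range_neg_one_pow_smul_add (fun j => insertOne K B p j (f x))]
    module

end GBD
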